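/- arXiv:1709.07032 — 2 statements merged into one kernel-verified Lean document; each statement's English description precedes it below -/
import Mathlib

section
/- The LP relaxation of the offline optimal rebalancing problem has zero integrality gap: for every nonnegative rebalancing cost function c : N × N × {1,…,T} → ℝ (c i j t ≥ 0) and every real-valued nonnegative feasible solution (x^p, x^r, s) of the LP relaxation, there exists an ℕ-valued feasible solution (y^p, y^r, u) of the offline rebalancing problem whose rebalancing cost Σ_{i,j,t} c i j t · y^r i j t is at most Σ_{i,j,t} c i j t · x^r i j t. -/
/-- ℕ-valued feasibility for the offline optimal rebalancing problem. -/
def IsFeasible {N : Type*} [Fintype N] (T : ℕ) (τ : N → N → ℕ)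
    (lam : N → N → ℕ → ℕ) (xp xr : N → N → ℕ → ℕ) (s : N → ℕ → ℕ) : Prop :=
  (∀ i j t, t ∈ Finset.Icc 1 T → xp i j t = lam i j t) ∧
  (∀ i t, t ∈ Finset.Icc 1 T →
    (∑ j, (xp i j t + xr i j t)) =
      s i t + ∑ j, (if τ j i < t then xp j i (t - τ j i) + xr j i (t - τ j i) else 0)) ∧
  (∀ i t, 1 < t → s i t = 0)

/-- Real-valued (LP relaxation) feasibility for the offline optimal rebalancing problem:
nonnegative entries, demand satisfaction, vehicle flow conservation (inflow terms whose
departure time would be `< 1` are taken to be `0`), and initial vehicles only at the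
first time interval. -/
def IsFeasibleReal {N : Type*} [Fintype N] (T : ℕ) (τ : N → N → ℕ)
    (lam : N → N → ℕ → ℕ) (xp xr : N → N → ℕ → ℝ) (s : N → ℕ → ℝ) : Prop :=
  (∀ i j t, 0 ≤ xp i j t) ∧ (∀ i j t, 0 ≤ xr i j t) ∧ (∀ i t, 0 ≤ s i t) ∧
  (∀ i j t, t ∈ Finset.Icc 1 T → xp i j t = (lam i j t : ℝ)) ∧
  (∀ i t, t ∈ Finset.Icc 1 T →
    (∑ j, (xp i j t + xr i j t)) -
      (∑ j, (if τ j i < t then xp j i (t - τ j i) + xr j i (t - τ j i) else 0))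
      = s i t) ∧
  (∀ i t, 1 < t → s i t = 0)

/-!
The demand flows are forced, so the rebalancing flows form a network flow on the time-expanded graph
whose net outflow at every node is a prescribed integer. Such a real flow can be rounded one arc at
a time. No node meets exactly one arc carrying a fractional value, since the net outflow there would
not be an integer; hence the fractional arcs, if there are any, outnumber the independent
conservation constraints they enter and carry a nonzero circulation. Pushing flow along this
circulation, in the direction that does not increase the cost, until some arc becomes integral
leaves strictly fewer fractional arcs.
-/

open Finset

section NetworkFlow

variable {E V R : Type*} [DecidableEq V] {A F : Finset E} {src dst : E → V}

section Ring

variable [Ring R]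

/-- The divergence of an arc flow `f` on the directed multigraph with arc set `A`, tails `src` and
heads `dst`: at each node, the flow leaving it minus the flow entering it. The arcs form a
`Finset` of an ambient type, so that one flow can be considered on several subgraphs. -/
def netOutflow (A : Finset E) (src dst : E → V) : (E → R) →ₗ[R] V → R where
  toFun f v := ∑ e ∈ A with src e = v, f e - ∑ e ∈ A with dst e = v, f e
  map_add' f g := by
    funext v
    simp only [Pi.add_apply, sum_add_distrib]
    abel
  map_smul' r f := by
    funext v
    simp only [Pi.smul_apply, smul_eq_mul, ← mul_sum, mul_sub, RingHom.id_apply]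

lemma netOutflow_apply (f : E → R) (v : V) :
    netOutflow A src dst f v = ∑ e ∈ A with src e = v, f e - ∑ e ∈ A with dst e = v, f e :=
  rfl

lemma netOutflow_sub_netOutflow_mem (S : AddSubgroup R) (hFA : F ⊆ A) {f : E → R}
    (hf : ∀ e ∈ A, e ∉ F → f e ∈ S) (v : V) :
    netOutflow A src dst f v - netOutflow F src dst f v ∈ S := by
  classical
  have sum_sub_sum_mem (p : E → V) :
      ∑ e ∈ A with p e = v, f e - ∑ e ∈ F with p e = v, f e ∈ S := by
    rw [← sum_sdiff (filter_subset_filter _ hFA), add_sub_cancel_right]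
    refine sum_mem fun e he => ?_
    simp only [mem_sdiff, mem_filter, not_and] at he
    exact hf e he.1.1 fun heF => he.2 heF he.1.2
  rw [netOutflow_apply, netOutflow_apply, sub_sub_sub_comm]
  exact sub_mem (sum_sub_sum_mem src) (sum_sub_sum_mem dst)

lemma sum_netOutflow_eq_zero {W : Finset V} (hsrc : ∀ e ∈ A, src e ∈ W) (hdst : ∀ e ∈ A, dst e ∈ W)
    (f : E → R) : ∑ v ∈ W, netOutflow A src dst f v = 0 := by
  simp only [netOutflow_apply, sum_sub_distrib]
  rw [sum_fiberwise_of_maps_to hsrc, sum_fiberwise_of_maps_to hdst, sub_self]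

lemma netOutflow_mem_of_forall_ne (S : AddSubgroup R) {f : E → R} {v₀ : V}
    (h : ∀ v, v ≠ v₀ → netOutflow A src dst f v ∈ S) (v : V) : netOutflow A src dst f v ∈ S := by
  rcases ne_or_eq v v₀ with hv | rfl
  · exact h v hv
  have htotal : ∑ w ∈ insert v (A.image src ∪ A.image dst), netOutflow A src dst f w = 0 :=
    sum_netOutflow_eq_zero
      (fun e he => mem_insert_of_mem (mem_union_left _ (mem_image_of_mem src he)))
      (fun e he => mem_insert_of_mem (mem_union_right _ (mem_image_of_mem dst he))) f
  rw [← add_sum_erase _ _ (mem_insert_self _ _)] at htotal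
  rw [eq_neg_of_add_eq_zero_left htotal]
  exact neg_mem (sum_mem fun w hw => h w (ne_of_mem_erase hw))

end Ring

/-- The number of arcs of `A` at the node `v`; a loop counts twice. -/
def arcDegree (A : Finset E) (src dst : E → V) (v : V) : ℕ :=
  #{e ∈ A | src e = v} + #{e ∈ A | dst e = v}

lemma sum_arcDegree {W : Finset V} (hsrc : ∀ e ∈ A, src e ∈ W) (hdst : ∀ e ∈ A, dst e ∈ W) :
    ∑ v ∈ W, arcDegree A src dst v = 2 * #A := by
  simp only [arcDegree, sum_add_distrib]
  rw [← card_eq_sum_card_fiberwise hsrc, ← card_eq_sum_card_fiberwise hdst, two_mul]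

lemma arcDegree_ne_zero_iff {v : V} :
    arcDegree A src dst v ≠ 0 ↔ v ∈ A.image src ∪ A.image dst := by
  simp only [arcDegree, ne_eq, Nat.add_eq_zero_iff, card_eq_zero, filter_eq_empty_iff, mem_union,
    mem_image, ← not_exists, not_and]
  grind

lemma card_endpoints_le_card (hdeg : ∀ v, arcDegree F src dst v ≠ 1) :
    #(F.image src ∪ F.image dst) ≤ #F := by
  have two_le_arcDegree : ∀ v ∈ F.image src ∪ F.image dst, 2 ≤ arcDegree F src dst v := by
    intro v hv
    have := arcDegree_ne_zero_iff.2 hv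
    have := hdeg v
    lia
  have htwo := card_nsmul_le_sum _ _ 2 two_le_arcDegree
  rw [sum_arcDegree (fun e he => mem_union_left _ (mem_image_of_mem src he))
    (fun e he => mem_union_right _ (mem_image_of_mem dst he)), smul_eq_mul] at htwo
  lia

lemma exists_netOutflow_eq_zero_of_arcDegree_ne_one (R : Type*) [DivisionRing R] (hF : F.Nonempty)
    (hdeg : ∀ v, arcDegree F src dst v ≠ 1) :
    ∃ d : E → R, (∃ e, d e ≠ 0) ∧ (∀ e ∉ F, d e = 0) ∧ netOutflow F src dst d = 0 := by
  obtain ⟨e₀, he₀⟩ := hF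
  let W := F.image src ∪ F.image dst
  have hv₀ : src e₀ ∈ W := mem_union_left _ (mem_image_of_mem src he₀)
  -- The constraint at `src e₀` is implied by the others, so only those are imposed.
  let L : (F → R) →ₗ[R] (W.erase (src e₀) → R) :=
    LinearMap.funLeft R R Subtype.val ∘ₗ netOutflow F src dst ∘ₗ
      Function.ExtendByZero.linearMap R Subtype.val
  have hrank : Module.finrank R (W.erase (src e₀) → R) < Module.finrank R (F → R) := by
    simp only [Module.finrank_fintype_fun_eq_card, Fintype.card_coe]
    exact (card_erase_lt_of_mem hv₀).trans_le (card_endpoints_le_card hdeg)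
  obtain ⟨d, hLd, hd⟩ := (Submodule.ne_bot_iff _).1 (L.ker_ne_bot_of_finrank_lt hrank)
  obtain ⟨e, hde⟩ := Function.ne_iff.1 hd
  refine ⟨Function.extend Subtype.val d 0, ⟨e, ?_⟩, fun e he => ?_, funext fun v => ?_⟩
  · rwa [Subtype.val_injective.extend_apply]
  · exact Function.extend_apply' _ _ _ fun ⟨e', he'⟩ => he (he' ▸ e'.2)
  · refine netOutflow_mem_of_forall_ne (⊥ : AddSubgroup R) (v₀ := src e₀) (fun v hv => ?_) v
    rw [AddSubgroup.mem_bot]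
    by_cases hvW : v ∈ W
    · exact congrFun hLd ⟨v, mem_erase.2 ⟨hv, hvW⟩⟩
    · have hdeg₀ : arcDegree F src dst v = 0 := not_not.1 fun h => hvW (arcDegree_ne_zero_iff.1 h)
      simp only [arcDegree, Nat.add_eq_zero_iff, card_eq_zero] at hdeg₀
      simp only [netOutflow_apply, hdeg₀, sum_empty, sub_self]

section Rounding

variable [Ring R] [LinearOrder R] [IsStrictOrderedRing R] [FloorRing R] {c f g h : E → R}

/-- The arcs of `A` on which the flow `f` is not an integer. -/
def fractionalArcs (A : Finset E) (f : E → R) : Finset E :=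
  {e ∈ A | Int.fract (f e) ≠ 0}

omit [IsStrictOrderedRing R] in
lemma fractionalArcs_subset : fractionalArcs A f ⊆ A :=
  filter_subset _ _

lemma mem_fractionalArcs {e : E} :
    e ∈ fractionalArcs A f ↔ e ∈ A ∧ f e ∉ (Int.castAddHom R).range := by
  rw [fractionalArcs, mem_filter, ne_eq, Int.fract_eq_zero_iff]
  rfl

lemma arcDegree_fractionalArcs_ne_one {v : V}
    (hf : netOutflow A src dst f v ∈ (Int.castAddHom R).range) :
    arcDegree (fractionalArcs A f) src dst v ≠ 1 := by
  have hfrac : netOutflow (fractionalArcs A f) src dst f v ∈ (Int.castAddHom R).range := by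
    have hsub := netOutflow_sub_netOutflow_mem (src := src) (dst := dst) (Int.castAddHom R).range
      (fractionalArcs_subset (A := A) (f := f))
      (fun e he heF => not_not.1 fun h => heF (mem_fractionalArcs.2 ⟨he, h⟩)) v
    simpa only [sub_sub_cancel] using sub_mem hf hsub
  have not_mem_range (p : E → V) {e : E} (he : {e ∈ fractionalArcs A f | p e = v} = {e}) :
      f e ∉ (Int.castAddHom R).range :=
    (mem_fractionalArcs.1 (mem_filter.1 (he ▸ mem_singleton_self e)).1).2
  intro hdeg
  rw [netOutflow_apply] at hfrac
  rcases Nat.add_eq_one_iff.1 hdeg with ⟨hout, hin⟩ | ⟨hout, hin⟩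
  · obtain ⟨e, he⟩ := card_eq_one.1 hin
    rw [card_eq_zero.1 hout, he, sum_empty, sum_singleton, zero_sub, neg_mem_iff] at hfrac
    exact not_mem_range dst he hfrac
  · obtain ⟨e, he⟩ := card_eq_one.1 hout
    rw [card_eq_zero.1 hin, he, sum_empty, sum_singleton, sub_zero] at hfrac
    exact not_mem_range src he hfrac

/-- `g` refines the flow `f` towards an integral one: it has the same net outflow, costs no more,
and stays between the floor and the ceiling of `f` on every arc, so that integral values of `f` are
kept. Fractional values are still allowed in `g`, so that refinements can be composed. -/
structure IsPartialRounding (A : Finset E) (src dst : E → V) (c f g : E → R) : Prop where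
  mem_Icc : ∀ e ∈ A, g e ∈ Set.Icc (⌊f e⌋ : R) ⌈f e⌉
  netOutflow_eq : netOutflow A src dst g = netOutflow A src dst f
  cost_le : ∑ e ∈ A, c e * g e ≤ ∑ e ∈ A, c e * f e

namespace IsPartialRounding

omit [IsStrictOrderedRing R] in
lemma refl : IsPartialRounding A src dst c f f :=
  ⟨fun _ _ => ⟨Int.floor_le _, Int.le_ceil _⟩, rfl, le_rfl⟩

lemma trans (hfg : IsPartialRounding A src dst c f g) (hgh : IsPartialRounding A src dst c g h) :
    IsPartialRounding A src dst c f h where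
  mem_Icc e he :=
    ⟨(Int.cast_le.2 (Int.le_floor.2 (hfg.mem_Icc e he).1)).trans (hgh.mem_Icc e he).1,
      (hgh.mem_Icc e he).2.trans (Int.cast_le.2 (Int.ceil_le.2 (hfg.mem_Icc e he).2))⟩
  netOutflow_eq := hgh.netOutflow_eq.trans hfg.netOutflow_eq
  cost_le := hgh.cost_le.trans hfg.cost_le

lemma fractionalArcs_subset (hfg : IsPartialRounding A src dst c f g) :
    fractionalArcs A g ⊆ fractionalArcs A f := by
  intro e he
  rw [mem_fractionalArcs] at he ⊢
  refine ⟨he.1, fun ⟨n, hn⟩ => he.2 ⟨n, ?_⟩⟩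
  have hge := hfg.mem_Icc e he.1
  rw [← hn, Int.coe_castAddHom, Int.floor_intCast, Int.ceil_intCast, Set.Icc_self] at hge
  exact hge.symm

lemma natCast_floor_eq (hfg : IsPartialRounding A src dst c f g)
    (hg : fractionalArcs A g = ∅) {e : E} (he : e ∈ A) (hfe : 0 ≤ f e) :
    (⌊g e⌋₊ : R) = g e := by
  have hint : g e ∈ (Int.castAddHom R).range :=
    not_not.1 fun h => notMem_empty e (hg ▸ mem_fractionalArcs.2 ⟨he, h⟩)
  have hnonneg : 0 ≤ g e :=
    (Int.cast_nonneg (Int.floor_nonneg.2 hfe)).trans (hfg.mem_Icc e he).1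
  obtain ⟨n, hn⟩ := hint
  rw [Int.coe_castAddHom] at hn
  rw [natCast_floor_eq_intCast_floor hnonneg, ← hn, Int.floor_intCast]

end IsPartialRounding

end Rounding

section StepAlongCirculation

variable [Field R] [LinearOrder R] [IsStrictOrderedRing R] [FloorRing R] {c f : E → R}

lemma exists_add_mul_mem_range_intCast (x : R) {y : R} (hy : y ≠ 0) :
    ∃ θ, 0 ≤ θ ∧ x + θ * y ∈ (Int.castAddHom R).range ∧
      ∀ ε, 0 ≤ ε → ε ≤ θ → x + ε * y ∈ Set.Icc (⌊x⌋ : R) ⌈x⌉ := by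
  have hfloor := Int.floor_le x
  have hceil := Int.le_ceil x
  rcases hy.lt_or_gt with hy | hy
  · refine ⟨(⌊x⌋ - x) / y, div_nonneg_of_nonpos (by linarith) hy.le, ⟨⌊x⌋, ?_⟩, ?_⟩
    · simp [hy.ne]
    · intro ε hε hεθ
      rw [le_div_iff_of_neg hy] at hεθ
      have := mul_nonpos_of_nonneg_of_nonpos hε hy.le
      constructor <;> linarith
  · refine ⟨(⌈x⌉ - x) / y, div_nonneg (by linarith) hy.le, ⟨⌈x⌉, ?_⟩, ?_⟩
    · simp [hy.ne']
    · intro ε hε hεθ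
      rw [le_div_iff₀ hy] at hεθ
      have := mul_nonneg hε hy.le
      constructor <;> linarith

lemma exists_common_step_mem_range_intCast (f : E → R) {d : E → R} (hF : F.Nonempty)
    (hd : ∀ e ∈ F, d e ≠ 0) :
    ∃ ε, 0 ≤ ε ∧ (∀ e ∈ F, f e + ε * d e ∈ Set.Icc (⌊f e⌋ : R) ⌈f e⌉) ∧
      ∃ e ∈ F, f e + ε * d e ∈ (Int.castAddHom R).range := by
  choose! θ hθ hint hbox using fun e he => exists_add_mul_mem_range_intCast (f e) (hd e he)
  obtain ⟨e₀, he₀, hmin⟩ := F.exists_min_image θ hF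
  exact ⟨θ e₀, hθ e₀ he₀, fun e he => hbox e he _ (hθ e₀ he₀) (hmin e he), e₀, he₀, hint e₀ he₀⟩

lemma exists_isPartialRounding_add_smul {d : E → R} (hdF : ∀ e, d e ≠ 0 → e ∈ fractionalArcs A f)
    (hd : ∃ e, d e ≠ 0) (hnet : netOutflow A src dst d = 0) (hcost : ∑ e ∈ A, c e * d e ≤ 0) :
    ∃ ε : R, IsPartialRounding A src dst c f (f + ε • d) ∧
      fractionalArcs A (f + ε • d) ⊂ fractionalArcs A f := by
  have hsupp : {e ∈ A | d e ≠ 0}.Nonempty := by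
    obtain ⟨e, he⟩ := hd
    exact ⟨e, mem_filter.2 ⟨fractionalArcs_subset (hdF e he), he⟩⟩
  obtain ⟨ε, hε, hbox, e₀, he₀, hint⟩ :=
    exists_common_step_mem_range_intCast f hsupp fun e he => (mem_filter.1 he).2
  have hround : IsPartialRounding A src dst c f (f + ε • d) := by
    refine ⟨fun e he => ?_, by rw [map_add, map_smul, hnet, smul_zero, add_zero], ?_⟩
    · by_cases hde : d e = 0
      · simpa [hde] using ⟨Int.floor_le (f e), Int.le_ceil (f e)⟩
      · exact hbox e (mem_filter.2 ⟨he, hde⟩)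
    · calc ∑ e ∈ A, c e * (f + ε • d) e
          = ∑ e ∈ A, c e * f e + ε * ∑ e ∈ A, c e * d e := by
            rw [mul_sum, ← sum_add_distrib]
            refine sum_congr rfl fun e _ => ?_
            simp only [Pi.add_apply, Pi.smul_apply, smul_eq_mul]
            ring
        _ ≤ ∑ e ∈ A, c e * f e :=
            add_le_of_nonpos_right (mul_nonpos_of_nonneg_of_nonpos hε hcost)
  refine ⟨ε, hround, hround.fractionalArcs_subset.ssubset_of_mem_notMem
    (hdF e₀ (mem_filter.1 he₀).2) fun he => ?_⟩
  exact (mem_fractionalArcs.1 he).2 hint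

lemma exists_isPartialRounding_fractionalArcs_ssubset (c : E → R)
    (hf : ∀ v, netOutflow A src dst f v ∈ (Int.castAddHom R).range)
    (hfrac : (fractionalArcs A f).Nonempty) :
    ∃ g, IsPartialRounding A src dst c f g ∧ fractionalArcs A g ⊂ fractionalArcs A f := by
  obtain ⟨d, ⟨e₀, he₀⟩, hdF, hnetF⟩ := exists_netOutflow_eq_zero_of_arcDegree_ne_one R hfrac
    fun v => arcDegree_fractionalArcs_ne_one (hf v)
  replace hdF : ∀ e, d e ≠ 0 → e ∈ fractionalArcs A f := fun e => not_imp_comm.1 (hdF e)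
  have hnet : netOutflow A src dst d = 0 := by
    funext v
    have hsub := netOutflow_sub_netOutflow_mem (src := src) (dst := dst) (⊥ : AddSubgroup R)
      (fractionalArcs_subset (f := f)) (fun e _ => not_imp_comm.1 (hdF e)) v
    rwa [hnetF, Pi.zero_apply, sub_zero, AddSubgroup.mem_bot] at hsub
  rcases le_total (∑ e ∈ A, c e * d e) 0 with hcost | hcost
  · obtain ⟨ε, h⟩ := exists_isPartialRounding_add_smul hdF ⟨e₀, he₀⟩ hnet hcost
    exact ⟨_, h⟩
  · obtain ⟨ε, h⟩ := exists_isPartialRounding_add_smul (c := c) (src := src) (dst := dst) (d := -d)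
      (fun e he => hdF e (neg_ne_zero.1 he)) ⟨e₀, neg_ne_zero.2 he₀⟩
      (by rw [map_neg, hnet, neg_zero]) (by simpa using hcost)
    exact ⟨_, h⟩

theorem exists_isPartialRounding_fractionalArcs_eq_empty (c f : E → R)
    (hf : ∀ v, netOutflow A src dst f v ∈ (Int.castAddHom R).range) :
    ∃ g, IsPartialRounding A src dst c f g ∧ fractionalArcs A g = ∅ := by
  induction hF : fractionalArcs A f using Finset.strongInduction generalizing f with
  | H F ih =>
    subst hF
    rcases (fractionalArcs A f).eq_empty_or_nonempty with hempty | hfrac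
    · exact ⟨f, .refl, hempty⟩
    obtain ⟨g, hfg, hlt⟩ := exists_isPartialRounding_fractionalArcs_ssubset c hf hfrac
    obtain ⟨h, hgh, hempty⟩ := ih _ hlt g (hfg.netOutflow_eq ▸ hf) rfl
    exact ⟨h, hfg.trans hgh, hempty⟩

end StepAlongCirculation

end NetworkFlow

section TimeExpandedNetwork

variable {N R : Type*} [Fintype N] {T : ℕ} {τ : N → N → ℕ}

/-- The vehicles leaving region `i` at time `t` minus those arriving there at time `t`, when
`x i j t` vehicles start a trip from `i` to `j` at time `t`; departures before time `1` do not
exist. -/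
def netDepartures [AddCommGroup R] (τ : N → N → ℕ) (x : N → N → ℕ → R) (i : N) (t : ℕ) : R :=
  ∑ j, x i j t - ∑ j, if τ j i < t then x j i (t - τ j i) else 0

/-- The arcs of the time-expanded network: `(i, j, t)` is a trip from `i` to `j` starting at
time `t`. -/
def tripArcs (N : Type*) [Fintype N] (T : ℕ) : Finset (N × N × ℕ) :=
  univ ×ˢ univ ×ˢ Icc 1 T

/-- The node of the time-expanded network for region `i` at time `t`. Vehicles can appear at time
`1` and disappear after time `T`, so all these region-time pairs are merged into a single node
`none`, at which no conservation law is imposed. -/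
def regionTimeNode (T : ℕ) (i : N) (t : ℕ) : Option (N × Icc 2 T) :=
  if ht : t ∈ Icc 2 T then some (i, ⟨t, ht⟩) else none

/-- The node at which the trip `(i, j, t)` starts. -/
def tripSrc (T : ℕ) (e : N × N × ℕ) : Option (N × Icc 2 T) :=
  regionTimeNode T e.1 e.2.2

/-- The node at which the trip `(i, j, t)` ends. -/
def tripDst (T : ℕ) (τ : N → N → ℕ) (e : N × N × ℕ) : Option (N × Icc 2 T) :=
  regionTimeNode T e.2.1 (e.2.2 + τ e.1 e.2.1)

lemma mem_tripArcs {e : N × N × ℕ} : e ∈ tripArcs N T ↔ e.2.2 ∈ Icc 1 T := by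
  simp [tripArcs]

lemma sum_tripArcs [AddCommMonoid R] (f : N → N → ℕ → R) :
    ∑ e ∈ tripArcs N T, f e.1 e.2.1 e.2.2 = ∑ i, ∑ j, ∑ t ∈ Icc 1 T, f i j t := by
  simp only [tripArcs, sum_product]

omit [Fintype N] in
lemma regionTimeNode_eq_some_iff {i j : N} {s : ℕ} {t : Icc 2 T} :
    regionTimeNode T j s = some (i, t) ↔ j = i ∧ s = t := by
  unfold regionTimeNode
  grind

lemma netOutflow_tripArcs [DecidableEq N] [Ring R] (x : N → N → ℕ → R) (i : N)
    (t : Icc 2 T) :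
    netOutflow (tripArcs N T) (tripSrc T) (tripDst T τ) (fun e => x e.1 e.2.1 e.2.2) (some (i, t)) =
      netDepartures τ x i t := by
  have hdep : ∑ e ∈ tripArcs N T with tripSrc T e = some (i, t), x e.1 e.2.1 e.2.2 =
      ∑ j, x i j t := by
    simp only [tripSrc, regionTimeNode_eq_some_iff]
    refine sum_nbij' (fun e => e.2.1) (fun j => (i, j, ↑t)) ?_ ?_ ?_ ?_ ?_ <;>
      grind [mem_tripArcs]
  have harr : ∑ e ∈ tripArcs N T with tripDst T τ e = some (i, t), x e.1 e.2.1 e.2.2 =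
      ∑ j, if τ j i < t then x j i (t - τ j i) else 0 := by
    simp only [tripDst, regionTimeNode_eq_some_iff]
    rw [← sum_filter]
    refine sum_nbij' (fun e => e.1) (fun j => (j, i, ↑t - τ j i)) ?_ ?_ ?_ ?_ ?_ <;>
      grind [mem_tripArcs]
  rw [netOutflow_apply, hdep, harr, netDepartures]

section NetDepartures

variable [AddCommGroup R] {x y : N → N → ℕ → R}

lemma netDepartures_add (i : N) (t : ℕ) :
    netDepartures τ (fun i j t => x i j t + y i j t) i t =
      netDepartures τ x i t + netDepartures τ y i t := by
  simp only [netDepartures, ← sum_filter, sum_add_distrib]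
  abel

lemma netDepartures_congr (hxy : ∀ i j, ∀ t ∈ Icc 1 T, x i j t = y i j t) (i : N) {t : ℕ}
    (ht : t ∈ Icc 1 T) : netDepartures τ x i t = netDepartures τ y i t := by
  have harrival : ∀ j, τ j i < t → x j i (t - τ j i) = y j i (t - τ j i) := fun j hj =>
    hxy j i _ (by grind)
  exact congrArg₂ (· - ·) (sum_congr rfl fun j _ => hxy i j t ht)
    (sum_congr rfl fun j _ => ite_congr rfl (harrival j) fun _ => rfl)

lemma netDepartures_mem (S : AddSubgroup R) (hx : ∀ i j t, x i j t ∈ S) (i : N) (t : ℕ) :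
    netDepartures τ x i t ∈ S := by
  simp only [netDepartures, ← sum_filter]
  exact sub_mem (sum_mem fun j _ => hx _ _ _) (sum_mem fun j _ => hx _ _ _)

end NetDepartures

variable {lam : N → N → ℕ → ℕ}

lemma IsFeasibleReal.netDepartures_eq_neg {xp xr : N → N → ℕ → ℝ} {s : N → ℕ → ℝ}
    (hfeas : IsFeasibleReal T τ lam xp xr s) (i : N) {t : ℕ} (ht : t ∈ Icc 2 T) :
    netDepartures τ xr i t = -netDepartures τ (fun i j t => (lam i j t : ℝ)) i t := by
  obtain ⟨-, -, -, hdemand, hflow, hlater⟩ := hfeas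
  obtain ⟨htwo, htT⟩ := mem_Icc.1 ht
  have ht' : t ∈ Icc 1 T := mem_Icc.2 ⟨by lia, htT⟩
  have hbalance : netDepartures τ (fun i j t => xp i j t + xr i j t) i t = 0 :=
    (hflow i t ht').trans (hlater i t htwo)
  rw [netDepartures_add, netDepartures_congr hdemand i ht'] at hbalance
  exact eq_neg_of_add_eq_zero_right hbalance

lemma IsFeasibleReal.netOutflow_mem_range_intCast [DecidableEq N] {xp xr : N → N → ℕ → ℝ}
    {s : N → ℕ → ℝ} (hfeas : IsFeasibleReal T τ lam xp xr s) (v : Option (N × Icc 2 T)) :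
    netOutflow (tripArcs N T) (tripSrc T) (tripDst T τ) (fun e => xr e.1 e.2.1 e.2.2) v ∈
      (Int.castAddHom ℝ).range := by
  refine netOutflow_mem_of_forall_ne _ (v₀ := none) (fun v hv => ?_) v
  obtain ⟨⟨i, t⟩, rfl⟩ := Option.ne_none_iff_exists'.1 hv
  rw [netOutflow_tripArcs xr i t, hfeas.netDepartures_eq_neg i t.2]
  exact neg_mem (netDepartures_mem (Int.castAddHom ℝ).range
    (fun i j t => ⟨lam i j t, Int.cast_natCast _⟩) i t)

/-- The conservation law at time `1` only defines the initial number of vehicles, because no trip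
arrives that early. -/
lemma isFeasible_of_netDepartures_eq_zero [Ring R] [CharZero R] (hτ : ∀ i j, 1 ≤ τ i j)
    {yr : N → N → ℕ → ℕ}
    (h : ∀ i, ∀ t ∈ Icc 2 T, netDepartures τ (fun i j t => (lam i j t + yr i j t : R)) i t = 0) :
    IsFeasible T τ lam lam yr fun i t => if t = 1 then ∑ j, (lam i j t + yr i j t) else 0 := by
  refine ⟨fun _ _ _ _ => rfl, fun i t ht => ?_, fun i t ht => if_neg ht.ne'⟩
  obtain ⟨hone, htT⟩ := mem_Icc.1 ht
  rcases hone.eq_or_lt with rfl | htwo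
  · simp [(hτ _ i).not_gt]
  · simp only [if_neg htwo.ne', zero_add]
    have hbalance := h i t (mem_Icc.2 ⟨htwo, htT⟩)
    simp only [netDepartures, sub_eq_zero] at hbalance
    exact_mod_cast hbalance

end TimeExpandedNetwork

theorem lp_relaxation_zero_integrality_gap_general
    {N : Type*} [Fintype N] (T : ℕ) (τ : N → N → ℕ) (hτ : ∀ i j, 1 ≤ τ i j)
    (lam : N → N → ℕ → ℕ) (c : N → N → ℕ → ℝ)
    (xp xr : N → N → ℕ → ℝ) (s : N → ℕ → ℝ)
    (hfeas : IsFeasibleReal T τ lam xp xr s) :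
    ∃ (yp yr : N → N → ℕ → ℕ) (u : N → ℕ → ℕ),
      IsFeasible T τ lam yp yr u ∧
      (∑ i, ∑ j, ∑ t ∈ Icc 1 T, c i j t * (yr i j t : ℝ))
        ≤ ∑ i, ∑ j, ∑ t ∈ Icc 1 T, c i j t * xr i j t := by
  classical
  obtain ⟨g, hg, hgint⟩ := exists_isPartialRounding_fractionalArcs_eq_empty
    (fun e => c e.1 e.2.1 e.2.2) _ hfeas.netOutflow_mem_range_intCast
  let yr : N → N → ℕ → ℕ := fun i j t => ⌊g (i, j, t)⌋₊
  have hyr : ∀ i j, ∀ t ∈ Icc 1 T, (yr i j t : ℝ) = g (i, j, t) := fun i j t ht =>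
    hg.natCast_floor_eq hgint (mem_tripArcs.2 ht) (hfeas.2.1 i j t)
  refine ⟨lam, yr, _, isFeasible_of_netDepartures_eq_zero (R := ℝ) hτ fun i t ht => ?_, ?_⟩
  · have hnet : netDepartures τ (fun i j t => g (i, j, t)) i t = netDepartures τ xr i t := by
      rw [← netOutflow_tripArcs _ i ⟨t, ht⟩, ← netOutflow_tripArcs _ i ⟨t, ht⟩]
      exact congrFun hg.netOutflow_eq _
    rw [netDepartures_add, netDepartures_congr hyr i (Icc_subset_Icc_left one_le_two ht), hnet,
      hfeas.netDepartures_eq_neg i ht, add_neg_cancel]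
  · rw [← sum_tripArcs, ← sum_tripArcs]
    refine (sum_congr rfl fun e he => ?_).trans_le hg.cost_le
    rw [hyr _ _ _ (mem_tripArcs.1 he)]

/-- **Zero integrality gap of the LP relaxation.**
For every nonnegative rebalancing cost `c` and every real-valued feasible solution of the
LP relaxation, there is an ℕ-valued feasible solution whose rebalancing cost is no larger. -/
theorem lp_relaxation_zero_integrality_gap
    {N : Type*} [Fintype N] [Nonempty N] (T : ℕ) (τ : N → N → ℕ)
    (hτ : ∀ i j, 1 ≤ τ i j) (hτdiag : ∀ i, τ i i = 1)
    (lam : N → N → ℕ → ℕ)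
    (c : N → N → ℕ → ℝ) (hc : ∀ i j t, 0 ≤ c i j t)
    (xp xr : N → N → ℕ → ℝ) (s : N → ℕ → ℝ)
    (hfeas : IsFeasibleReal T τ lam xp xr s) :
    ∃ (yp yr : N → N → ℕ → ℕ) (u : N → ℕ → ℕ),
      IsFeasible T τ lam yp yr u ∧
      (∑ i, ∑ j, ∑ t ∈ Finset.Icc 1 T, c i j t * (yr i j t : ℝ))
        ≤ ∑ i, ∑ j, ∑ t ∈ Finset.Icc 1 T, c i j t * xr i j t := by
  exact lp_relaxation_zero_integrality_gap_general T τ hτ lam c xp xr s hfeas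
end

section
/- If T ≥ 1 and at the first time interval every region has at least as many available vehicles as outstanding customers originating there, i.e. s i 1 ≥ Σ_{j∈N} λ0 i j for all i ∈ N, then the MPC rebalancing problem is feasible: there exist ℕ-valued x^p, x^r, w, d satisfying the relaxed demand constraint, the vehicle flow-conservation constraint, and the constraint that all outstanding customers are served within the planning horizon (in particular, all outstanding customers can be picked up at time t = 1). -/
/-- Feasibility for the MPC rebalancing problem with vehicle availability schedule `s`,
outstanding demand `lam0`, and predicted demand `lamhat`:
(a) relaxed demand satisfaction `x^p + d = λ̂ + w`,
(b) vehicle flow conservation (stated in ℕ as `Σ out = s i t + Σ in`, with inflow terms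
whose departure time would be `< 1` taken to be `0`),
(c) all outstanding customers are served within the planning horizon. -/
def MPCFeasible {N : Type*} [Fintype N] (T : ℕ) (τ : N → N → ℕ)
    (s : N → ℕ → ℕ) (lam0 : N → N → ℕ) (lamhat : N → N → ℕ → ℕ)
    (xp xr w d : N → N → ℕ → ℕ) : Prop :=
  (∀ i j t, t ∈ Finset.Icc 1 T → xp i j t + d i j t = lamhat i j t + w i j t) ∧
  (∀ i t, t ∈ Finset.Icc 1 T →
    (∑ j, (xp i j t + xr i j t)) =
      s i t + ∑ j, (if τ j i < t then xp j i (t - τ j i) + xr j i (t - τ j i) else 0)) ∧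
  (∀ i j, (∑ t ∈ Finset.Icc 1 T, w i j t) = lam0 i j)

/-!
Serving every outstanding customer at `t = 1` and nobody else uses at most `s i 1` vehicles at
each region `i` in the first step, and none afterwards. Hence no vehicle ever has to leave a region
before it arrives there, and the surplus of each step can be parked on the loop from `i` to `i`.
The parked vehicles return every `τ i i` steps and are parked again, so that conservation holds
at every step.
-/

open Finset

section Flow

variable {N : Type*}

/-- The number of vehicles of the flow `x` that reach region `i` at time `t`. As in `MPCFeasible`,
the first possible departure time is `1`. -/
def flowArrivals [Fintype N] (τ : N → N → ℕ) (x : N → N → ℕ → ℕ) (i : N) (t : ℕ) : ℕ :=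
  ∑ j, if τ j i < t then x j i (t - τ j i) else 0

/-- The rebalancing flow that parks at each region `i` the `a i r` surplus vehicles of every time
`r ≥ 1`. They travel the loop from `i` to `i` forever, departing at the times `r + m * τ i i`. -/
def idlingFlow [DecidableEq N] (τ : N → N → ℕ) (a : N → ℕ → ℕ) (i j : N) (t : ℕ) : ℕ :=
  if i = j then ∑ r ∈ Icc 1 t with τ i i ∣ t - r, a i r else 0

/-- The pickup schedule that serves all outstanding demand at time `1`. -/
def immediatePickup (lam0 : N → N → ℕ) (i j : N) (t : ℕ) : ℕ :=
  if t = 1 then lam0 i j else 0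

theorem filter_Icc_dvd_sub_eq_insert {k t : ℕ} (hk : 1 ≤ k) (ht : 1 ≤ t) :
    {r ∈ Icc 1 t | k ∣ t - r} = insert t {r ∈ Icc 1 (t - k) | k ∣ t - k - r} := by
  ext r
  simp only [mem_filter, mem_Icc, mem_insert]
  constructor
  · rintro ⟨⟨hr, hrt⟩, hdvd⟩
    rcases hrt.eq_or_lt with rfl | hlt
    · exact Or.inl rfl
    · have hle : k ≤ t - r := Nat.le_of_dvd (Nat.sub_pos_of_lt hlt) hdvd
      refine Or.inr ⟨⟨hr, by omega⟩, ?_⟩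
      rw [Nat.sub_right_comm]
      exact Nat.dvd_sub hdvd dvd_rfl
  · rintro (rfl | ⟨⟨hr, hrt⟩, hdvd⟩)
    · exact ⟨⟨ht, le_rfl⟩, by simp⟩
    · have hsub : t - r = t - k - r + k := by omega
      exact ⟨⟨hr, by omega⟩, hsub ▸ hdvd.add dvd_rfl⟩

theorem sum_Icc_dvd_sub_eq_add {M : Type*} [AddCommMonoid M] {k t : ℕ} (hk : 1 ≤ k) (ht : 1 ≤ t)
    (a : ℕ → M) :
    ∑ r ∈ Icc 1 t with k ∣ t - r, a r = a t + ∑ r ∈ Icc 1 (t - k) with k ∣ t - k - r, a r := by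
  have hnotMem : t ∉ ({r ∈ Icc 1 (t - k) | k ∣ t - k - r} : Finset ℕ) := by
    simp only [mem_filter, mem_Icc]
    omega
  rw [filter_Icc_dvd_sub_eq_insert hk ht, sum_insert hnotMem]

theorem sum_Icc_immediatePickup {T : ℕ} (hT : 1 ≤ T) (lam0 : N → N → ℕ) (i j : N) :
    ∑ t ∈ Icc 1 T, immediatePickup lam0 i j t = lam0 i j := by
  simp [immediatePickup, hT]

variable [Fintype N]

theorem flowArrivals_add (τ : N → N → ℕ) (x y : N → N → ℕ → ℕ) (i : N) (t : ℕ) :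
    flowArrivals τ (x + y) i t = flowArrivals τ x i t + flowArrivals τ y i t := by
  simp only [flowArrivals, ← sum_add_distrib, Pi.add_apply, ite_add_ite, add_zero]

theorem sum_idlingFlow [DecidableEq N] (τ : N → N → ℕ) (a : N → ℕ → ℕ) (i : N) (t : ℕ) :
    ∑ j, idlingFlow τ a i j t = ∑ r ∈ Icc 1 t with τ i i ∣ t - r, a i r := by
  simp only [idlingFlow, sum_ite_eq, mem_univ, if_true]

theorem flowArrivals_idlingFlow [DecidableEq N] (τ : N → N → ℕ) (a : N → ℕ → ℕ) (i : N) (t : ℕ) :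
    flowArrivals τ (idlingFlow τ a) i t =
      ∑ r ∈ Icc 1 (t - τ i i) with τ i i ∣ t - τ i i - r, a i r := by
  rw [flowArrivals, sum_eq_single i (fun j _ hj => by simp [idlingFlow, hj]) (by simp)]
  split_ifs with h
  · simp only [idlingFlow, if_true]
  · simp [Nat.sub_eq_zero_of_le (not_lt.mp h)]

theorem sum_idlingFlow_eq_add_flowArrivals [DecidableEq N] (τ : N → N → ℕ) (a : N → ℕ → ℕ)
    {i : N} {t : ℕ} (hτ : 1 ≤ τ i i) (ht : 1 ≤ t) :
    ∑ j, idlingFlow τ a i j t = a i t + flowArrivals τ (idlingFlow τ a) i t := by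
  rw [sum_idlingFlow, flowArrivals_idlingFlow, sum_Icc_dvd_sub_eq_add hτ ht]

theorem exists_rebalancing_of_departures_le {T : ℕ} {τ : N → N → ℕ} (hτ : ∀ i, 1 ≤ τ i i)
    {s : N → ℕ → ℕ} {x : N → N → ℕ → ℕ}
    (hx : ∀ i, ∀ t ∈ Icc 1 T, ∑ j, x i j t ≤ s i t + flowArrivals τ x i t) :
    ∃ y : N → N → ℕ → ℕ, ∀ i, ∀ t ∈ Icc 1 T,
      ∑ j, (x + y) i j t = s i t + flowArrivals τ (x + y) i t := by
  classical
  let surplus (i : N) (t : ℕ) : ℕ := s i t + flowArrivals τ x i t - ∑ j, x i j t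
  refine ⟨idlingFlow τ surplus, fun i t ht => ?_⟩
  calc ∑ j, (x + idlingFlow τ surplus) i j t
      = ∑ j, x i j t + ∑ j, idlingFlow τ surplus i j t := sum_add_distrib
    _ = ∑ j, x i j t + surplus i t + flowArrivals τ (idlingFlow τ surplus) i t := by
      rw [sum_idlingFlow_eq_add_flowArrivals τ surplus (hτ i) (mem_Icc.mp ht).1, add_assoc]
    _ = s i t + flowArrivals τ x i t + flowArrivals τ (idlingFlow τ surplus) i t := by
      rw [Nat.add_sub_cancel' (hx i t ht)]
    _ = s i t + flowArrivals τ (x + idlingFlow τ surplus) i t := by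
      rw [flowArrivals_add, add_assoc]

theorem exists_mpcFeasible_of_departures_le {T : ℕ} {τ : N → N → ℕ} (hτ : ∀ i, 1 ≤ τ i i)
    {s : N → ℕ → ℕ} {lam0 : N → N → ℕ} {lamhat xp w : N → N → ℕ → ℕ}
    (hdemand : ∀ i j, ∀ t ∈ Icc 1 T, xp i j t ≤ lamhat i j t + w i j t)
    (hsupply : ∀ i, ∀ t ∈ Icc 1 T, ∑ j, xp i j t ≤ s i t + flowArrivals τ xp i t)
    (hserved : ∀ i j, ∑ t ∈ Icc 1 T, w i j t = lam0 i j) :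
    ∃ xr d : N → N → ℕ → ℕ, MPCFeasible T τ s lam0 lamhat xp xr w d := by
  obtain ⟨xr, hxr⟩ := exists_rebalancing_of_departures_le hτ hsupply
  exact ⟨xr, lamhat + w - xp,
    fun i j t ht => Nat.add_sub_cancel' (hdemand i j t ht), hxr, hserved⟩

theorem sum_immediatePickup_le {s : N → ℕ → ℕ} {lam0 : N → N → ℕ}
    (hs : ∀ i, ∑ j, lam0 i j ≤ s i 1) (i : N) (t : ℕ) :
    ∑ j, immediatePickup lam0 i j t ≤ s i t := by
  by_cases ht : t = 1
  · subst ht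
    simpa only [immediatePickup, if_true] using hs i
  · simp [immediatePickup, ht]

end Flow

theorem mpc_feasible_of_sufficient_initial_vehicles_general
    {N : Type*} [Fintype N] (T : ℕ) (τ : N → N → ℕ) (hτ : ∀ i, 1 ≤ τ i i)
    (s : N → ℕ → ℕ) (lam0 : N → N → ℕ) (lamhat : N → N → ℕ → ℕ)
    (hT : 1 ≤ T) (hs : ∀ i, (∑ j, lam0 i j) ≤ s i 1) :
    ∃ xp xr w d : N → N → ℕ → ℕ,
      MPCFeasible T τ s lam0 lamhat xp xr w d ∧
      (∀ i j, w i j 1 = lam0 i j) := by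
  have hsupply (i : N) (t : ℕ) : ∑ j, immediatePickup lam0 i j t ≤
      s i t + flowArrivals τ (immediatePickup lam0) i t :=
    (sum_immediatePickup_le hs i t).trans (Nat.le_add_right _ _)
  obtain ⟨xr, d, hfeasible⟩ := exists_mpcFeasible_of_departures_le (lamhat := lamhat) hτ
    (fun i j t _ => Nat.le_add_left (immediatePickup lam0 i j t) (lamhat i j t))
    (fun i t _ => hsupply i t) (sum_Icc_immediatePickup hT lam0)
  exact ⟨immediatePickup lam0, xr, immediatePickup lam0, d, hfeasible, fun _ _ => if_pos rfl⟩

/-- **Feasibility of the MPC problem with sufficient initial availability.**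
If `T ≥ 1` and at the first time interval every region has at least as many available
vehicles as outstanding customers originating there, then the MPC rebalancing problem
is feasible; in particular all outstanding customers can be picked up at time `t = 1`. -/
theorem mpc_feasible_of_sufficient_initial_vehicles
    {N : Type*} [Fintype N] [Nonempty N] (T : ℕ) (τ : N → N → ℕ)
    (hτ : ∀ i j, 1 ≤ τ i j) (hτdiag : ∀ i, τ i i = 1)
    (s : N → ℕ → ℕ) (lam0 : N → N → ℕ) (lamhat : N → N → ℕ → ℕ)
    (hT : 1 ≤ T) (hs : ∀ i, (∑ j, lam0 i j) ≤ s i 1) :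
    ∃ xp xr w d : N → N → ℕ → ℕ,
      MPCFeasible T τ s lam0 lamhat xp xr w d ∧
      (∀ i j, w i j 1 = lam0 i j) := by
  exact mpc_feasible_of_sufficient_initial_vehicles_general T τ (fun i => hτ i i)
    s lam0 lamhat hT hs
end
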